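/- For every n with 5 ≤ n ≤ 12, the first player wins Building Nim BN(2n,5); formally, BNwins (fun _ : Fin 5 => 0) (2*n) for all n with 5 ≤ n ≤ 12. -/

import Mathlib

instance : Std.Commutative (fun x y : ℕ => x ^^^ y) := ⟨Nat.xor_comm⟩
instance : Std.Associative (fun x y : ℕ => x ^^^ y) := ⟨Nat.xor_assoc⟩

/-- `BNwins s r` holds iff the player to move wins Building Nim from position `s`
(the stack heights) with `r` tokens remaining to be placed. When no tokens remain,
Nim play starts, and by Bouton's theorem the player to move wins iff the
Nim-sum (bitwise XOR) of the stack heights is nonzero. -/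
def BNwins {ℓ : ℕ} : (Fin ℓ → ℕ) → ℕ → Prop
  | s, 0 => Finset.univ.fold (fun x y : ℕ => x ^^^ y) 0 s ≠ 0
  | s, r + 1 => ∃ i : Fin ℓ, ¬ BNwins (Function.update s i (s i + 1)) r

/-- The index encoding the heights of the last four stacks of a five-stack position in base `25`. -/
def stackIndex (s : Fin 5 → ℕ) : ℕ := s 1 + 25 * s 2 + 625 * s 3 + 15625 * s 4

/-- The change of `stackIndex` when a token is placed on a given stack. -/
def stackShift : Fin 5 → ℕ := ![0, 1, 25, 625, 15625]

lemma stackIndex_update (s : Fin 5 → ℕ) (i : Fin 5) :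
    stackIndex (Function.update s i (s i + 1)) = stackIndex s + stackShift i := by
  fin_cases i <;> simp [stackIndex, stackShift] <;> omega

lemma sum_update_add_one {ι : Type*} [Fintype ι] [DecidableEq ι] (s : ι → ℕ) (i : ι) :
    ∑ j, Function.update s i (s i + 1) j = ∑ j, s j + 1 := by
  rw [Finset.sum_update_of_mem (Finset.mem_univ i),
    ← Finset.add_sum_erase _ _ (Finset.mem_univ i), Finset.erase_eq]
  omega

/-- Bit `x` is set iff bit `x + stackShift i` of `w` is set for all `i`. -/
def allMoves (w : ℕ) : ℕ :=
  w &&& (w >>> 1) &&& (w >>> 25) &&& (w >>> 625) &&& (w >>> 15625)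

/-- Bit `x` is set iff bit `x + stackShift i` of `w` is set for some `i`. -/
def someMove (w : ℕ) : ℕ :=
  w ||| (w >>> 1) ||| (w >>> 25) ||| (w >>> 625) ||| (w >>> 15625)

lemma testBit_allMoves (w x : ℕ) :
    (allMoves w).testBit x = true ↔ ∀ i, w.testBit (x + stackShift i) = true := by
  simp [allMoves, stackShift, Fin.forall_fin_succ, Nat.testBit_shiftRight, add_comm x, and_assoc]

lemma testBit_someMove (w x : ℕ) :
    (someMove w).testBit x = true ↔ ∃ i, w.testBit (x + stackShift i) = true := by
  simp [someMove, stackShift, Fin.exists_fin_succ, Nat.testBit_shiftRight, add_comm x, or_assoc]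

/-- Apply `f` to `w`; unfolding this definition evaluates `w` first. -/
def evalThen (w : ℕ) (f : ℕ → ℕ) : ℕ :=
  Nat.rec (f 0) (fun k _ => f (k + 1)) w

lemma evalThen_eq (w : ℕ) (f : ℕ → ℕ) : evalThen w f = f w := by
  cases w <;> rfl

/-- The bit mask obtained from `w` by prepending `m` rounds of a move of the player to move
followed by an arbitrary reply. -/
def winningMask (w : ℕ) : ℕ → ℕ
  | 0 => w
  | m + 1 => evalThen (evalThen (winningMask w m) allMoves) someMove

lemma bnwins_of_testBit_winningMask {N w : ℕ}
    (hw : ∀ s : Fin 5 → ℕ, ∑ i, s i = N → w.testBit (stackIndex s) = true → BNwins s 0)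
    (m : ℕ) (s : Fin 5 → ℕ) (hs : ∑ i, s i + 2 * m = N)
    (h : (winningMask w m).testBit (stackIndex s) = true) : BNwins s (2 * m) := by
  induction m generalizing s with
  | zero => exact hw s hs h
  | succ m ih =>
    simp only [winningMask, evalThen_eq, testBit_someMove, testBit_allMoves] at h
    obtain ⟨i, hi⟩ := h
    refine ⟨i, ?_⟩
    rintro ⟨j, hj⟩
    refine hj (ih _ ?_ ?_)
    · rw [sum_update_add_one, sum_update_add_one]
      omega
    · rw [stackIndex_update, stackIndex_update]
      exact hi j

/-- The number whose set bits are the entries of `l`. -/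
def maskOfList : List ℕ → ℕ
  | [] => 0
  | i :: l => maskOfList l ||| 1 <<< i

lemma testBit_maskOfList {l : List ℕ} {i : ℕ} (h : i ∈ l) :
    (maskOfList l).testBit i = true := by
  induction l with
  | nil => simp at h
  | cons j l ih =>
    rcases List.mem_cons.1 h with rfl | h
    · simp [maskOfList, Nat.testBit_shiftLeft]
    · simp [maskOfList, ih h]

/-- The indices of the five-stack positions with `N` tokens and Nim-sum zero. -/
def nimZeroIndices (N : ℕ) : List ℕ :=
  (List.range (N + 1)).flatMap fun b =>
    (List.range (N + 1 - b)).flatMap fun c =>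
      (List.range (N + 1 - b - c)).flatMap fun d =>
        (List.range (N + 1 - b - c - d)).flatMap fun e =>
          bif Nat.beq ((b ^^^ (c ^^^ (d ^^^ e))) + b + c + d + e) N then
            [b + 25 * c + 625 * d + 15625 * e]
          else []

lemma stackIndex_mem_nimZeroIndices {N : ℕ} {s : Fin 5 → ℕ} (hs : ∑ i, s i = N)
    (h0 : ¬ BNwins s 0) : stackIndex s ∈ nimZeroIndices N := by
  have hx : s 0 = s 1 ^^^ (s 2 ^^^ (s 3 ^^^ s 4)) := by
    rw [BNwins, not_not] at h0
    simp [Fin.univ_succ] at h0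
    exact h0
  rw [Fin.sum_univ_five] at hs
  simp only [nimZeroIndices, List.mem_flatMap, List.mem_range]
  refine ⟨s 1, by omega, s 2, by omega, s 3, by omega, s 4, by omega, ?_⟩
  rw [← hx, hs]
  simp [stackIndex]

/-- Flip the lowest `k` bits of `w`. -/
def flipBits (k w : ℕ) : ℕ := (2 ^ k - 1) ^^^ w

lemma testBit_flipBits {k i : ℕ} (h : i < k) (w : ℕ) :
    (flipBits k w).testBit i = !w.testBit i := by
  simp [flipBits, Nat.testBit_two_pow_sub_one, h]

/-- A mask of the final five-stack positions with `N` tokens and nonzero Nim-sum. -/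
def nimNonzeroMask (N : ℕ) : ℕ := flipBits 390625 (maskOfList (nimZeroIndices N))

lemma bnwins_zero_of_testBit {N : ℕ} (hN : N ≤ 24) (s : Fin 5 → ℕ) (hs : ∑ i, s i = N)
    (h : (nimNonzeroMask N).testBit (stackIndex s) = true) : BNwins s 0 := by
  by_contra h0
  have hlt : stackIndex s < 390625 := by
    rw [Fin.sum_univ_five] at hs
    unfold stackIndex
    omega
  rw [nimNonzeroMask, testBit_flipBits hlt,
    testBit_maskOfList (stackIndex_mem_nimZeroIndices hs h0)] at h
  exact absurd h (by decide)

lemma bnwins_of_mask {n : ℕ} (hn : n ≤ 12)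
    (h : (winningMask (nimNonzeroMask (2 * n)) n).testBit 0 = true) :
    BNwins (fun _ : Fin 5 => 0) (2 * n) :=
  bnwins_of_testBit_winningMask (bnwins_zero_of_testBit (by omega)) n _ (by simp) h

/-- For every `n` with `5 ≤ n ≤ 12`, the first player wins `BN(2n, 5)`. -/
theorem first_player_wins_special_cases (n : ℕ) (h5 : 5 ≤ n) (h12 : n ≤ 12) :
    BNwins (fun _ : Fin 5 => 0) (2 * n) := by
  apply bnwins_of_mask h12
  interval_cases n <;> decide +kernel
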